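/- For every u in the Schwartz space 𝒮(ℝ, ℂ⁴) and every λ ≥ 1, one has both ‖x²u‖² ≤ ‖Nu‖² + ‖u‖² and ‖Qu‖² ≤ ‖Nu‖² + ‖u‖². -/

import Mathlib

/-!
Put `w = 1 + x²`. Integrating by parts twice,
`2 Re ⟨Qu, wu⟩ = 2 ∫ w ‖u'‖² + 2 ∫ λ²g²w ‖u‖² - ∫ w'' ‖u‖² ≥ -2 ‖u‖²`, so expanding the square in
`Nu = Qu + wu` gives `‖Qu‖² + ‖wu‖² ≤ ‖Nu‖² + 2 ‖u‖²`. Since `w² ≥ x⁴ + 1`, the term `‖wu‖²` absorbs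
`‖x²u‖²` and one of the two copies of `‖u‖²`.
-/

noncomputable section

open MeasureTheory

abbrev V4 : Type := EuclideanSpace ℂ (Fin 4)

/-- A `4 × 4` complex matrix acting on `ℂ⁴` as a continuous linear map. -/
def Mop (A : Matrix (Fin 4) (Fin 4) ℂ) : V4 →L[ℂ] V4 := Matrix.toEuclideanCLM (𝕜 := ℂ) A

/-- The `L²` inner product `⟨u, v⟩ = ∫ ⟨u(x), v(x)⟩ dx` (conjugate-linear in the first slot). -/
def L2inner (u v : ℝ → V4) : ℂ := ∫ x : ℝ, (inner ℂ (u x) (v x) : ℂ)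

/-- The `L²` norm `‖u‖ = (∫ ‖u(x)‖² dx)^{1/2}`. -/
def L2norm (u : ℝ → V4) : ℝ := Real.sqrt (∫ x : ℝ, ‖u x‖ ^ 2)

/-- The operator `D = −i d/dx`. -/
def Dop (u : ℝ → V4) : ℝ → V4 := fun x => (-Complex.I) • deriv u x

/-- The per-mode free Dirac Hamiltonian `H₀u = Γ¹Du + λgΓ²u + fu`. -/
def H0op (Γ1 Γ2 : Matrix (Fin 4) (Fin 4) ℂ) (g f : ℝ → ℝ) (lam : ℝ) (u : ℝ → V4) : ℝ → V4 :=
  fun x => Mop Γ1 (Dop u x) + (lam * g x) • Mop Γ2 (u x) + f x • u x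

/-- The operator `Qu = −u'' + λ²g²u`. -/
def Qop (g : ℝ → ℝ) (lam : ℝ) (u : ℝ → V4) : ℝ → V4 :=
  fun x => -(deriv (deriv u) x) + (lam ^ 2 * g x ^ 2) • u x

/-- The comparison operator `Nu = Qu + (1 + x²)u`. -/
def Nop (g : ℝ → ℝ) (lam : ℝ) (u : ℝ → V4) : ℝ → V4 :=
  fun x => Qop g lam u x + (1 + x ^ 2) • u x

section

open scoped SchwartzMap InnerProductSpace ENNReal

theorem memLp_top_const_mul_sq {α : Type*} [MeasurableSpace α] {μ : Measure α} {g : α → ℝ}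
    (hg : MemLp g ∞ μ) (c : ℝ) : MemLp (fun x => c * g x ^ 2) ∞ μ := by
  simpa only [sq] using! (hg.smul hg).const_mul c

section L2

variable {α E : Type*} [MeasurableSpace α] {μ : Measure α}
  [NormedAddCommGroup E] [InnerProductSpace ℝ E] {f g : α → E}

theorem integrable_inner_of_memLp_two (hf : MemLp f 2 μ) (hg : MemLp g 2 μ) :
    Integrable (fun x => ⟪f x, g x⟫_ℝ) μ := by
  refine (L2.integrable_inner (𝕜 := ℝ) (hf.toLp f) (hg.toLp g)).congr ?_
  filter_upwards [hf.coeFn_toLp, hg.coeFn_toLp] with x hfx hgx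
  rw [hfx, hgx]

theorem integral_norm_add_sq (hf : MemLp f 2 μ) (hg : MemLp g 2 μ) :
    ∫ x, ‖f x + g x‖ ^ 2 ∂μ
      = ∫ x, ‖f x‖ ^ 2 ∂μ + 2 * ∫ x, ⟪f x, g x⟫_ℝ ∂μ + ∫ x, ‖g x‖ ^ 2 ∂μ := by
  have hff : Integrable (fun x => ‖f x‖ ^ 2) μ := hf.integrable_norm_pow two_ne_zero
  have hfg : Integrable (fun x => 2 * ⟪f x, g x⟫_ℝ) μ :=
    (integrable_inner_of_memLp_two hf hg).const_mul 2
  have hgg : Integrable (fun x => ‖g x‖ ^ 2) μ := hg.integrable_norm_pow two_ne_zero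
  simp_rw [norm_add_sq_real]
  rw [integral_add (hff.fun_add hfg) hgg, integral_add hff hfg, integral_const_mul]

end L2

theorem hasTemperateGrowth_deriv {E : Type*} [NormedAddCommGroup E] [NormedSpace ℝ E] {f : ℝ → E}
    (hf : f.HasTemperateGrowth) : (deriv f).HasTemperateGrowth := by
  refine ⟨(contDiff_infty_iff_deriv.mp hf.1).2, fun n => ?_⟩
  obtain ⟨k, C, hC⟩ := hf.2 (n + 1)
  refine ⟨k, C, fun x => ?_⟩
  simpa only [norm_iteratedFDeriv_eq_norm_iteratedDeriv, iteratedDeriv_succ'] using hC x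

section WeightedSchwartz

variable {D : Type*} [NormedAddCommGroup D] [NormedSpace ℝ D] [MeasurableSpace D] [BorelSpace D]
  [SecondCountableTopology D] {μ : Measure D} [μ.HasTemperateGrowth] {w : D → ℝ}

theorem memLp_smul_schwartz {E : Type*} [NormedAddCommGroup E] [NormedSpace ℝ E]
    (hw : w.HasTemperateGrowth) (u : 𝓢(D, E)) (p : ℝ≥0∞) : MemLp (fun x => w x • u x) p μ := by
  simpa only [SchwartzMap.smulLeftCLM_apply hw] using (SchwartzMap.smulLeftCLM E w u).memLp p μ

theorem integrable_mul_inner_schwartz {E : Type*} [NormedAddCommGroup E] [InnerProductSpace ℝ E]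
    (hw : w.HasTemperateGrowth) (f g : 𝓢(D, E)) : Integrable (fun x => w x * ⟪f x, g x⟫_ℝ) μ := by
  simpa only [real_inner_smul_left] using
    integrable_inner_of_memLp_two (memLp_smul_schwartz hw f 2) (g.memLp 2 μ)

theorem integral_norm_sq_smul_add_integral_norm_sq_le {E : Type*} [NormedAddCommGroup E]
    [NormedSpace ℝ E] (hw : w.HasTemperateGrowth) (hw0 : ∀ x, 0 ≤ w x) (u : 𝓢(D, E)) :
    ∫ x, ‖w x • u x‖ ^ 2 ∂μ + ∫ x, ‖u x‖ ^ 2 ∂μ ≤ ∫ x, ‖(1 + w x) • u x‖ ^ 2 ∂μ := by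
  have hwu : Integrable (fun x => ‖w x • u x‖ ^ 2) μ :=
    (memLp_smul_schwartz hw u 2).integrable_norm_pow two_ne_zero
  have hu : Integrable (fun x => ‖u x‖ ^ 2) μ := (u.memLp 2 μ).integrable_norm_pow two_ne_zero
  have hwu' : Integrable (fun x => ‖(1 + w x) • u x‖ ^ 2) μ :=
    (memLp_smul_schwartz (by fun_prop) u 2).integrable_norm_pow two_ne_zero
  rw [← integral_add hwu hu]
  refine integral_mono (hwu.add hu) hwu' fun x => ?_
  simp only [norm_smul, mul_pow, Real.norm_eq_abs, sq_abs]
  nlinarith [mul_nonneg (hw0 x) (sq_nonneg ‖u x‖)]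

end WeightedSchwartz

section IntegrationByParts

variable {E : Type*} [NormedAddCommGroup E] [InnerProductSpace ℝ E] {w : ℝ → ℝ}

theorem integral_mul_inner_deriv (hw : w.HasTemperateGrowth) (f g : 𝓢(ℝ, E)) :
    ∫ x, w x * ⟪f x, deriv g x⟫_ℝ
      = -(∫ x, deriv w x * ⟪f x, g x⟫_ℝ) - ∫ x, w x * ⟪deriv f x, g x⟫_ℝ := by
  have hderiv (x : ℝ) : deriv (fun y => w y • f y) x = w x • deriv f x + deriv w x • f x :=
    deriv_fun_smul (hw.1.differentiable (by simp) x) f.differentiableAt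
  have hparts : ∫ x, ⟪w x • f x, deriv g x⟫_ℝ
      = -∫ x, ⟪deriv (fun y => w y • f y) x, g x⟫_ℝ := by
    simpa only [SchwartzMap.smulLeftCLM_apply hw] using!
      SchwartzMap.integral_bilinear_deriv_right_eq_neg_left (SchwartzMap.smulLeftCLM E w f) g
        (innerSL ℝ)
  simp only [hderiv, inner_add_left, real_inner_smul_left] at hparts
  have hf'g : Integrable fun x => w x * ⟪deriv f x, g x⟫_ℝ :=
    integrable_mul_inner_schwartz hw (SchwartzMap.derivCLM ℝ E f) g
  rw [hparts, integral_add hf'g (integrable_mul_inner_schwartz (hasTemperateGrowth_deriv hw) f g)]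
  ring

theorem two_mul_integral_mul_inner_deriv_self (hw : w.HasTemperateGrowth) (u : 𝓢(ℝ, E)) :
    2 * ∫ x, w x * ⟪u x, deriv u x⟫_ℝ = -∫ x, deriv w x * ‖u x‖ ^ 2 := by
  have hparts := integral_mul_inner_deriv hw u u
  simp only [real_inner_comm (u _), real_inner_self_eq_norm_sq] at hparts ⊢
  linarith

theorem two_mul_integral_mul_inner_deriv_deriv (hw : w.HasTemperateGrowth) (u : 𝓢(ℝ, E)) :
    2 * ∫ x, w x * ⟪u x, deriv (deriv u) x⟫_ℝ
      = (∫ x, deriv (deriv w) x * ‖u x‖ ^ 2) - 2 * ∫ x, w x * ‖deriv u x‖ ^ 2 := by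
  have hparts : ∫ x, w x * ⟪u x, deriv (deriv u) x⟫_ℝ
      = -(∫ x, deriv w x * ⟪u x, deriv u x⟫_ℝ) - ∫ x, w x * ⟪deriv u x, deriv u x⟫_ℝ :=
    integral_mul_inner_deriv hw u (SchwartzMap.derivCLM ℝ E u)
  simp only [real_inner_self_eq_norm_sq] at hparts
  linarith [two_mul_integral_mul_inner_deriv_self (hasTemperateGrowth_deriv hw) u]

end IntegrationByParts

section Schrodinger

/-- The one-dimensional Schrödinger operator `-u'' + Vu`, acting on vector-valued functions; the
operator `Q` is the case `V = λ²g²`. -/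
def schrodingerOp {E : Type*} [NormedAddCommGroup E] [NormedSpace ℝ E] (V : ℝ → ℝ)
    (u : ℝ → E) : ℝ → E :=
  fun x => -(deriv (deriv u) x) + V x • u x

theorem memLp_schrodingerOp {E : Type*} [NormedAddCommGroup E] [NormedSpace ℝ E] {V : ℝ → ℝ}
    {u : 𝓢(ℝ, E)} {p : ℝ≥0∞} (hVu : MemLp (fun x => V x • u x) p) :
    MemLp (schrodingerOp V u) p :=
  ((SchwartzMap.derivCLM ℝ E (SchwartzMap.derivCLM ℝ E u)).memLp p).neg.add hVu

variable {E : Type*} [NormedAddCommGroup E] [InnerProductSpace ℝ E] {V w : ℝ → ℝ} {u : 𝓢(ℝ, E)}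

theorem two_mul_integral_inner_schrodingerOp_smul (hw : w.HasTemperateGrowth)
    (hVu : MemLp (fun x => V x • u x) 2) :
    2 * ∫ x, ⟪schrodingerOp V u x, w x • u x⟫_ℝ
      = 2 * (∫ x, w x * ‖deriv u x‖ ^ 2) + 2 * (∫ x, w x * (V x * ‖u x‖ ^ 2))
        - ∫ x, deriv (deriv w) x * ‖u x‖ ^ 2 := by
  have hpointwise (x : ℝ) : ⟪schrodingerOp V u x, w x • u x⟫_ℝ
      = w x * (V x * ‖u x‖ ^ 2) - w x * ⟪u x, deriv (deriv u) x⟫_ℝ := by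
    rw [schrodingerOp, inner_add_left, inner_neg_left, real_inner_smul_left, real_inner_smul_right,
      real_inner_smul_right, real_inner_self_eq_norm_sq, real_inner_comm]
    ring
  have hpotential : Integrable fun x => w x * (V x * ‖u x‖ ^ 2) := by
    simpa only [real_inner_smul_left, real_inner_smul_right, real_inner_self_eq_norm_sq] using
      integrable_inner_of_memLp_two hVu (memLp_smul_schwartz hw u 2)
  have hkinetic : Integrable fun x => w x * ⟪u x, deriv (deriv u) x⟫_ℝ :=
    integrable_mul_inner_schwartz hw u (SchwartzMap.derivCLM ℝ E (SchwartzMap.derivCLM ℝ E u))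
  simp_rw [hpointwise]
  rw [integral_sub hpotential hkinetic]
  linarith [two_mul_integral_mul_inner_deriv_deriv hw u]

theorem integral_norm_sq_schrodingerOp_add_le (hw : w.HasTemperateGrowth) (hw0 : ∀ x, 0 ≤ w x)
    (hV : ∀ x, 0 ≤ V x) (hVu : MemLp (fun x => V x • u x) 2) :
    (∫ x, ‖schrodingerOp V u x‖ ^ 2) + ∫ x, ‖w x • u x‖ ^ 2
      ≤ (∫ x, ‖schrodingerOp V u x + w x • u x‖ ^ 2)
        + ∫ x, deriv (deriv w) x * ‖u x‖ ^ 2 := by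
  have hkinetic : 0 ≤ ∫ x, w x * ‖deriv u x‖ ^ 2 :=
    integral_nonneg fun x => mul_nonneg (hw0 x) (sq_nonneg _)
  have hpotential : 0 ≤ ∫ x, w x * (V x * ‖u x‖ ^ 2) :=
    integral_nonneg fun x => mul_nonneg (hw0 x) (mul_nonneg (hV x) (sq_nonneg _))
  have hexpand := integral_norm_add_sq (memLp_schrodingerOp hVu) (memLp_smul_schwartz hw u 2)
  linarith [two_mul_integral_inner_schrodingerOp_smul hw hVu]

theorem weight_estimates_general (hV : ∀ x, 0 ≤ V x) (u : 𝓢(ℝ, E))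
    (hVu : MemLp (fun x => V x • u x) 2) :
    (∫ x : ℝ, ‖x ^ 2 • u x‖ ^ 2) + (∫ x, ‖schrodingerOp V u x‖ ^ 2)
      ≤ (∫ x, ‖schrodingerOp V u x + (1 + x ^ 2) • u x‖ ^ 2) + ∫ x, ‖u x‖ ^ 2 := by
  have hw : (fun x : ℝ => 1 + x ^ 2).HasTemperateGrowth := by fun_prop
  have hw'' : deriv (deriv fun x : ℝ => 1 + x ^ 2) = fun _ => 2 := by
    have hw' : deriv (fun x : ℝ => 1 + x ^ 2) = fun x => 2 * x := by ext x; simp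
    rw [hw']
    ext x
    simp
  have hbound := integral_norm_sq_schrodingerOp_add_le hw (fun x => by positivity) hV hVu
  rw [hw'', integral_const_mul] at hbound
  have habsorb : (∫ x : ℝ, ‖x ^ 2 • u x‖ ^ 2) + ∫ x, ‖u x‖ ^ 2
      ≤ ∫ x : ℝ, ‖(1 + x ^ 2) • u x‖ ^ 2 :=
    integral_norm_sq_smul_add_integral_norm_sq_le (by fun_prop) (fun x => sq_nonneg x) u
  linarith

end Schrodinger

end

theorem L2norm_sq (u : ℝ → V4) : L2norm u ^ 2 = ∫ x, ‖u x‖ ^ 2 :=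
  Real.sq_sqrt (integral_nonneg fun _ => sq_nonneg _)

/-- the weight estimates: for every Schwartz `u` and every `λ ≥ 1`,
`‖x²u‖² ≤ ‖Nu‖² + ‖u‖²` and `‖Qu‖² ≤ ‖Nu‖² + ‖u‖²`. -/
theorem weight_estimates
    (g : ℝ → ℝ) (hg_smooth : ContDiff ℝ (⊤ : ℕ∞) g) (Cb : ℝ) (hg_bdd : ∀ x : ℝ, |g x| ≤ Cb)
    (u : SchwartzMap ℝ V4) (lam : ℝ) (hlam : 1 ≤ lam) :
    L2norm (fun x => (x ^ 2 : ℝ) • u x) ^ 2 ≤ L2norm (Nop g lam ⇑u) ^ 2 + L2norm ⇑u ^ 2 ∧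
    L2norm (Qop g lam ⇑u) ^ 2 ≤ L2norm (Nop g lam ⇑u) ^ 2 + L2norm ⇑u ^ 2 := by
  have hV : MemLp (fun x => lam ^ 2 * g x ^ 2) ⊤ := memLp_top_const_mul_sq
    (memLp_top_of_bound hg_smooth.continuous.aestronglyMeasurable Cb (.of_forall hg_bdd)) _
  have hsum : L2norm (fun x => (x ^ 2 : ℝ) • u x) ^ 2 + L2norm (Qop g lam u) ^ 2
      ≤ L2norm (Nop g lam u) ^ 2 + L2norm u ^ 2 := by
    simpa only [L2norm_sq] using!
      weight_estimates_general (fun x => by positivity) u ((u.memLp 2).smul hV)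
  exact ⟨le_of_add_le_of_nonneg_left hsum (sq_nonneg _),
    le_of_add_le_of_nonneg_right hsum (sq_nonneg _)⟩
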